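/- arXiv:2309.12611 — 5 statements merged into one kernel-verified Lean document; each statement's English description precedes it below -/
import Mathlib

section
/- Fix vehicle length l > 0, uncertainty parameter σₒ > 0 and speed v > 0. The per-time-step collision probability η ↦ p(v,η) := Φ((l − v·η)/(v·σₒ·√η)), where Φ is the standard Gaussian cumulative distribution function, is strictly decreasing in the headway η on (0, ∞). -/
open MeasureTheory Real Filter Set

/-- The standard Gaussian probability density function. -/
noncomputable def stdGaussianPDF (x : ℝ) : ℝ :=
  (Real.sqrt (2 * Real.pi))⁻¹ * Real.exp (-x ^ 2 / 2)

/-- The standard Gaussian cumulative distribution function Φ. -/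
noncomputable def stdGaussianCDF (x : ℝ) : ℝ :=
  ∫ t in Set.Iic x, stdGaussianPDF t

/-- The per-time-step collision probability p(v,η) = Φ((l − v·η)/(v·σₒ·√η)). -/
noncomputable def collisionProb (l σₒ v η : ℝ) : ℝ :=
  stdGaussianCDF ((l - v * η) / (v * σₒ * Real.sqrt η))

theorem stdGaussianPDF_integrable : Integrable stdGaussianPDF := by
  have h := (integrable_exp_neg_mul_sq (b := 1 / 2) (by norm_num)).const_mul
    (Real.sqrt (2 * Real.pi))⁻¹
  refine h.congr (Eventually.of_forall fun x => ?_)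
  simp only [stdGaussianPDF]
  congr 2
  ring

theorem stdGaussianPDF_pos (x : ℝ) : 0 < stdGaussianPDF x := by
  unfold stdGaussianPDF
  positivity

theorem stdGaussianCDF_strictMono : StrictMono stdGaussianCDF := by
  intro a b hab
  have h := intervalIntegral.integral_Iic_sub_Iic
    (stdGaussianPDF_integrable.integrableOn (s := Iic a))
    (stdGaussianPDF_integrable.integrableOn (s := Iic b))
  have hpos : 0 < ∫ x in a..b, stdGaussianPDF x :=
    intervalIntegral.intervalIntegral_pos_of_pos
      stdGaussianPDF_integrable.intervalIntegrable stdGaussianPDF_pos hab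
  unfold stdGaussianCDF
  linarith

/-- for fixed l > 0, σₒ > 0 and v > 0, the collision probability
η ↦ p(v,η) is strictly decreasing in the headway η on (0, ∞). -/
theorem collisionProb_strictAntiOn_headway (l σₒ v : ℝ)
    (hl : 0 < l) (hσ : 0 < σₒ) (hv : 0 < v) :
    StrictAntiOn (fun η => collisionProb l σₒ v η) (Set.Ioi 0) := by
  intro a ha b hb hab
  have ha' : 0 < a := ha
  have hb' : 0 < b := hb
  apply stdGaussianCDF_strictMono
  have hs : 0 < Real.sqrt a := Real.sqrt_pos.2 ha'
  have ht : 0 < Real.sqrt b := Real.sqrt_pos.2 hb'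
  have hst : Real.sqrt a < Real.sqrt b := Real.sqrt_lt_sqrt ha'.le hab
  have ea : a = Real.sqrt a ^ 2 := (Real.sq_sqrt ha'.le).symm
  have eb : b = Real.sqrt b ^ 2 := (Real.sq_sqrt hb'.le).symm
  rw [div_lt_div_iff₀ (by positivity) (by positivity)]
  generalize Real.sqrt a = s at *
  generalize Real.sqrt b = t at *
  subst ea eb
  have hts : 0 < t - s := sub_pos.2 hst
  have key : 0 < v * σₒ * (t - s) * (l + v * s * t) := by positivity
  nlinarith [key]
end

section
/- (Lemma 3) Fix vehicle length l > 0 and uncertainty parameter σₒ > 0. If two speed–headway pairs (v₁,η₁) and (v₂,η₂) with v₁, v₂, η₁, η₂ > 0 yield the same collision probability, p(v₁,η₁) = p(v₂,η₂), and v₁ < v₂, then η₁ > η₂; that is, along a level set of the collision probability, an increase in speed forces a decrease in headway. -/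
open MeasureTheory Real Filter Set

/-- Lemma 3: along a level set of the collision probability, an
increase in speed forces a decrease in headway. -/
theorem headway_decreases_with_speed_on_level_set (l σₒ v₁ v₂ η₁ η₂ : ℝ)
    (hl : 0 < l) (hσ : 0 < σₒ)
    (hv₁ : 0 < v₁) (hv₂ : 0 < v₂) (hη₁ : 0 < η₁) (hη₂ : 0 < η₂)
    (hlevel : collisionProb l σₒ v₁ η₁ = collisionProb l σₒ v₂ η₂)
    (hv : v₁ < v₂) :
    η₂ < η₁ := by
  by_contra hcon
  have hη : η₁ ≤ η₂ := not_lt.mp hcon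
  have heq := stdGaussianCDF_strictMono.injective hlevel
  refine absurd heq (ne_of_gt ?_)
  have hs₁ := Real.sqrt_pos.mpr hη₁
  have hs₂ := Real.sqrt_pos.mpr hη₂
  have hs := Real.sqrt_le_sqrt hη
  have e₁ := Real.sq_sqrt hη₁.le
  have e₂ := Real.sq_sqrt hη₂.le
  generalize Real.sqrt η₁ = a at *
  generalize Real.sqrt η₂ = b at *
  subst e₁ e₂
  rw [div_lt_div_iff₀ (by positivity) (by positivity)]
  have k₁ : 0 < σₒ * l * (v₂ * b - v₁ * a) := by
    have : v₁ * a < v₂ * b := mul_lt_mul hv hs hs₁ hv₂.le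
    exact mul_pos (mul_pos hσ hl) (by linarith)
  have k₂ : 0 ≤ σₒ * (v₁ * v₂ * a * b) * (b - a) :=
    mul_nonneg (by positivity) (by linarith)
  linarith
end

section
/- Fix vehicle length l > 0, uncertainty parameter σₒ > 0 and speed v > 0. The map η ↦ p(v,η) = Φ((l − v·η)/(v·σₒ·√η)) is differentiable on (0,∞) with derivative dp/dη = −φ(z(η)) · (v·η + l)/(2·v·σₒ·η^{3/2}), where z(η) = (l − v·η)/(v·σₒ·√η) and φ is the standard Gaussian density; in particular this derivative is strictly negative. -/
open MeasureTheory Real Filter Set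

theorem stdGaussianPDF_continuous : Continuous stdGaussianPDF := by
  unfold stdGaussianPDF
  fun_prop

theorem stdGaussianCDF_hasDerivAt (x : ℝ) :
    HasDerivAt stdGaussianCDF (stdGaussianPDF x) x := by
  have e : stdGaussianCDF =
      fun y => stdGaussianCDF 0 + ∫ t in (0 : ℝ)..y, stdGaussianPDF t := by
    funext y
    have := intervalIntegral.integral_Iic_sub_Iic (a := 0) (b := y)
      stdGaussianPDF_integrable.integrableOn stdGaussianPDF_integrable.integrableOn
    rw [← this]
    simp [stdGaussianCDF]
  rw [e]
  exact (stdGaussianPDF_continuous.integral_hasStrictDerivAt 0 x).hasDerivAt.const_add _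

/-- η ↦ p(v,η) is differentiable on (0,∞) with derivative
dp/dη = −φ(z(η))·(v·η + l)/(2·v·σₒ·η^{3/2}), where z(η) = (l − v·η)/(v·σₒ·√η),
and this derivative is strictly negative. -/
theorem collisionProb_hasDerivAt_headway (l σₒ v : ℝ)
    (hl : 0 < l) (hσ : 0 < σₒ) (hv : 0 < v) :
    ∀ η ∈ Set.Ioi (0 : ℝ),
      HasDerivAt (fun η => collisionProb l σₒ v η)
        (-(stdGaussianPDF ((l - v * η) / (v * σₒ * Real.sqrt η)) *
            (v * η + l) / (2 * v * σₒ * η ^ ((3 : ℝ) / 2)))) η ∧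
      -(stdGaussianPDF ((l - v * η) / (v * σₒ * Real.sqrt η)) *
            (v * η + l) / (2 * v * σₒ * η ^ ((3 : ℝ) / 2))) < 0 := by
  intro η hη
  have hη : 0 < η := hη
  have hs : 0 < Real.sqrt η := Real.sqrt_pos.mpr hη
  have hss : Real.sqrt η ^ 2 = η := Real.sq_sqrt hη.le
  have hpow : η ^ ((3 : ℝ) / 2) = η * Real.sqrt η := by
    rw [Real.sqrt_eq_rpow, show (3 : ℝ) / 2 = 1 + 1 / 2 by norm_num,
      Real.rpow_add hη, Real.rpow_one]
  have hφ : 0 < stdGaussianPDF ((l - v * η) / (v * σₒ * Real.sqrt η)) := by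
    unfold stdGaussianPDF
    positivity
  constructor
  · have hnum : HasDerivAt (fun η => l - v * η) (-v) η := by
      simpa using ((hasDerivAt_id η).const_mul v).const_sub l
    have hden := (Real.hasDerivAt_sqrt hη.ne').const_mul (v * σₒ)
    have hz := hnum.fun_div hden (by positivity)
    have h := (stdGaussianCDF_hasDerivAt _).comp η hz
    refine h.congr_deriv ?_
    rw [hpow]
    generalize stdGaussianPDF ((l - v * η) / (v * σₒ * Real.sqrt η)) = c
    generalize Real.sqrt η = s at *
    subst hss
    field_simp
    ring
  · rw [neg_lt_zero]
    positivity
end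

section
/- (Key step of Proposition 1) Fix vehicle length l > 0, uncertainty parameter σₒ > 0 and positive constants T, L, τ. Let 0 < v₁ < v₂ and let η₁, η_r > 0 satisfy p(v₂,η_r) = p(v₁,η₁). Then η_r < η₁ and the collision-inclusive capacity satisfies s(v₂,η_r) > s(v₁,η₁). -/
open MeasureTheory Real Filter Set

/-- The collision-inclusive capacity s(v,η) = 1/(η + (T·L)/(τ·v)·p(v,η)). -/
noncomputable def cic (l σₒ T L τ v η : ℝ) : ℝ :=
  1 / (η + (T * L) / (τ * v) * collisionProb l σₒ v η)


theorem stdGaussianCDF_nonneg (x : ℝ) : 0 ≤ stdGaussianCDF x :=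
  integral_nonneg fun t => (stdGaussianPDF_pos t).le

theorem collision_arg_eq (l σₒ v η : ℝ) (hσ : 0 < σₒ) (hv : 0 < v) (hη : 0 < η) :
    (l - v * η) / (v * σₒ * Real.sqrt η) = (l / (v * Real.sqrt η) - Real.sqrt η) / σₒ := by
  have h := Real.sqrt_pos.2 hη
  have h2 := Real.sq_sqrt hη.le
  field_simp
  rw [h2]

/-- key step of Proposition 1: if 0 < v₁ < v₂ and η₁, ηr > 0
satisfy p(v₂,ηr) = p(v₁,η₁), then ηr < η₁ and s(v₂,ηr) > s(v₁,η₁). -/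
theorem cic_increases_along_level_set (l σₒ T L τ v₁ v₂ η₁ ηr : ℝ)
    (hl : 0 < l) (hσ : 0 < σₒ) (hT : 0 < T) (hL : 0 < L) (hτ : 0 < τ)
    (hv₁ : 0 < v₁) (hv : v₁ < v₂) (hη₁ : 0 < η₁) (hηr : 0 < ηr)
    (hlevel : collisionProb l σₒ v₂ ηr = collisionProb l σₒ v₁ η₁) :
    ηr < η₁ ∧ cic l σₒ T L τ v₁ η₁ < cic l σₒ T L τ v₂ ηr := by
  have hv₂ : 0 < v₂ := hv₁.trans hv
  have hlt : ηr < η₁ := by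
    have h := stdGaussianCDF_strictMono.injective hlevel
    rw [collision_arg_eq l σₒ v₂ ηr hσ hv₂ hηr, collision_arg_eq l σₒ v₁ η₁ hσ hv₁ hη₁,
      div_left_inj' hσ.ne'] at h
    by_contra! hle
    have h1 : Real.sqrt η₁ ≤ Real.sqrt ηr := Real.sqrt_le_sqrt hle
    have ha := Real.sqrt_pos.2 hη₁
    have h2 : l / (v₂ * Real.sqrt ηr) < l / (v₁ * Real.sqrt η₁) := by
      apply div_lt_div_of_pos_left hl (by positivity)
      exact mul_lt_mul hv h1 ha hv₂.le
    linarith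
  refine ⟨hlt, ?_⟩
  unfold cic
  rw [hlevel]
  have hp : 0 ≤ collisionProb l σₒ v₁ η₁ := stdGaussianCDF_nonneg _
  apply one_div_lt_one_div_of_lt
  · positivity
  · have h3 : T * L / (τ * v₂) ≤ T * L / (τ * v₁) := by gcongr
    have := mul_le_mul_of_nonneg_right h3 hp
    linarith
end

section
/- Fix vehicle length l > 0, uncertainty parameter σₒ > 0 and positive constants T, L, τ. For fixed headway η > 0, the collision-inclusive capacity v ↦ s(v,η) = 1/(η + (T·L)/(τ·v)·p(v,η)) is strictly increasing in the speed v on (0,∞). -/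
open MeasureTheory Real Filter Set

theorem stdGaussianCDF_pos (x : ℝ) : 0 < stdGaussianCDF x := by
  unfold stdGaussianCDF
  rw [setIntegral_pos_iff_support_of_nonneg_ae
    (Eventually.of_forall fun t => (stdGaussianPDF_pos t).le)
    stdGaussianPDF_integrable.integrableOn]
  have : Function.support stdGaussianPDF = Set.univ := by
    ext t
    simp [(stdGaussianPDF_pos t).ne']
  rw [this]
  simp

theorem stdGaussianCDF_mono {x y : ℝ} (h : x ≤ y) :
    stdGaussianCDF x ≤ stdGaussianCDF y := by
  unfold stdGaussianCDF
  exact setIntegral_mono_set stdGaussianPDF_integrable.integrableOn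
    (Eventually.of_forall fun t => (stdGaussianPDF_pos t).le)
    (Eventually.of_forall (Set.Iic_subset_Iic.mpr h))

/-- for fixed headway η > 0, the collision-inclusive capacity
v ↦ s(v,η) is strictly increasing in the speed v on (0,∞). -/
theorem cic_strictMonoOn_speed (l σₒ T L τ η : ℝ)
    (hl : 0 < l) (hσ : 0 < σₒ) (hT : 0 < T) (hL : 0 < L) (hτ : 0 < τ)
    (hη : 0 < η) :
    StrictMonoOn (fun v => cic l σₒ T L τ v η) (Set.Ioi 0) := by
  intro a ha b hb hab
  simp only [Set.mem_Ioi] at ha hb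
  have hs : 0 < Real.sqrt η := Real.sqrt_pos.mpr hη
  have hle : collisionProb l σₒ b η ≤ collisionProb l σₒ a η := by
    unfold collisionProb
    apply stdGaussianCDF_mono
    rw [div_le_div_iff₀ (by positivity) (by positivity)]
    have : 0 < l * (b - a) * (σₒ * Real.sqrt η) := by
      have := sub_pos.mpr hab
      positivity
    nlinarith
  have hpa : 0 < collisionProb l σₒ a η := stdGaussianCDF_pos _
  have hpb : 0 < collisionProb l σₒ b η := stdGaussianCDF_pos _
  have hc : T * L / (τ * b) < T * L / (τ * a) := by
    apply div_lt_div_of_pos_left (by positivity) (by positivity)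
    exact mul_lt_mul_of_pos_left hab hτ
  have hcb : 0 < T * L / (τ * b) := by positivity
  simp only [cic]
  apply one_div_lt_one_div_of_lt (by positivity)
  nlinarith [mul_lt_mul_of_pos_right hc hpa, mul_le_mul_of_nonneg_left hle hcb.le]
end
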